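/- Let k be a commutative ring and n a natural number. The map D on the graded k-module with degree-m part the free k-module on STuple(n,m) satisfies D ∘ D = 0; hence (K(n)_*, D) is a chain complex of k-modules. -/

import Mathlib

/-- `IsSTuple n m B`: the family of blocks `B₀, …, Bₘ` is an `m`-split `(n+1)`-tuple:
all blocks are nonempty, their concatenation contains each element of `{0,…,n}` exactly
once, the heads of the blocks are strictly increasing, and the head of each block is
strictly smaller than every other entry of that block. -/
def IsSTuple (n m : ℕ) (B : Fin (m + 1) → List ℕ) : Prop :=
  (∀ i, B i ≠ []) ∧
  ((List.ofFn B).flatten.Perm (List.range (n + 1))) ∧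
  (∀ i j : Fin (m + 1), i < j → (B i).headI < (B j).headI) ∧
  (∀ i : Fin (m + 1), ∀ x ∈ (B i).tail, (B i).headI < x)

/-- The set `STuple(n,m)` of `m`-split `(n+1)`-tuples. -/
structure STuple (n m : ℕ) where
  B : Fin (m + 1) → List ℕ
  prop : IsSTuple n m B

/-- The projection `p` sending `(B₀ | … | Bₘ)` to the concatenation `B₀B₁⋯Bₘ`. -/
def pval {m : ℕ} (B : Fin (m + 1) → List ℕ) : List ℕ := (List.ofFn B).flatten

/-- `starOp x y S` is the list `x *_S y`: the entries of `x`, followed by the entries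
`y_ℓ` for `ℓ ∈ S` in decreasing order of `ℓ`, then `y₀`, then the entries `y_ℓ` for
`ℓ ∈ {1,…,|y|-1} ∖ S` in increasing order of `ℓ`. -/
def starOp (x y : List ℕ) (S : Finset ℕ) : List ℕ :=
  x ++ ((S.sort (· ≤ ·)).reverse.map (fun ℓ => y.getD ℓ 0)) ++
    y.headI :: ((((Finset.Icc 1 (y.length - 1)) \ S).sort (· ≤ ·)).map (fun ℓ => y.getD ℓ 0))

/-- The family of blocks obtained from `(B₀ | … | B_{m+1})` by replacing `Bᵢ` with
`Bᵢ *_S Bⱼ` and omitting the block `Bⱼ` (for `i < j`). -/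
def removeReplace {m : ℕ} (B : Fin (m + 2) → List ℕ) (i j : Fin (m + 2)) (S : Finset ℕ) :
    Fin (m + 1) → List ℕ :=
  fun l => if (l : ℕ) < (j : ℕ) then
      (if (l : ℕ) = (i : ℕ) then starOp (B l.castSucc) (B j) S else B l.castSucc)
    else B l.succ

/-- The degree-`m` part `K(n)_m`: the free `k`-module on `STuple(n,m)`. -/
abbrev Kmod (k : Type*) [CommRing k] (n m : ℕ) : Type _ := STuple n m →₀ k

open Classical in
/-- The basis element of `K(n)_m` attached to a family of blocks when it is an `m`-split
`(n+1)`-tuple (and `0` otherwise). -/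
noncomputable def toBasisK (k : Type*) [CommRing k] (n m : ℕ) (B : Fin (m + 1) → List ℕ) :
    Kmod k n m :=
  if h : IsSTuple n m B then Finsupp.single ⟨B, h⟩ 1 else 0

/-- The map `D : K(n)_{m+1} → K(n)_m`, defined on a basis element `b = (B₀|…|B_{m+1})` by
`D(b) = Σ_{0≤i<j≤m+1} (-1)ʲ Σ_{S ⊆ {1,…,|Bⱼ|-1}} (-1)^{|S|}
  (B₀ | … | Bᵢ₋₁ | Bᵢ *_S Bⱼ | Bᵢ₊₁ | … | B̂ⱼ | … | B_{m+1})`. -/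
noncomputable def Dmap (k : Type*) [CommRing k] (n m : ℕ) :
    Kmod k n (m + 1) →ₗ[k] Kmod k n m :=
  Finsupp.lift (Kmod k n m) k (STuple n (m + 1))
    (fun b => ∑ j : Fin (m + 2), ∑ i : Fin (m + 2),
      if (i : ℕ) < (j : ℕ) then
        ((-1 : ℤ) ^ (j : ℕ)) • ∑ S ∈ (Finset.Icc 1 ((b.B j).length - 1)).powerset,
          ((-1 : ℤ) ^ S.card) • toBasisK k n m (removeReplace b.B i j S)
      else 0)

/-!
For a right Leibniz algebra, Loday's boundary on its tensor algebra is the linear map with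
`d 1 = 0` and `d (ω ⊗ x) = ω · x - d ω ⊗ x`, where `ω · x` is the action of `x` by derivations.
The Leibniz identity extends from the algebra to this action and forces `d` to commute with it;
hence `d² (ω ⊗ x) = d ω · x - (d ω · x - d² ω ⊗ x) = d² ω ⊗ x`, and `d² = 0` by induction.

In the free Leibniz algebra on the letters `0, 1, 2, …`, whose basis is the set of nonempty words,
right multiplication by a word `w d` is the commutator of the operator appending `d` with right
multiplication by `w`. Expanding these commutators gives `[x, y] = ∑ S, (-1)^|S| x *_S y`. So
sending `(B₀ | … | Bₘ)` to `B₀ ⊗ ⋯ ⊗ Bₘ` embeds `K(n)` into the Loday complex of the free Leibniz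
algebra, and it carries `D` to `d` up to a sign depending only on the degree.
-/

open Function
open TensorAlgebra (ι tprod)

section RightRecursion

variable {k V M : Type*} [CommRing k] [AddCommGroup V] [Module k V] [AddCommGroup M] [Module k M]

theorem tensorAlgebra_linearMap_ext_right {f g : TensorAlgebra k V →ₗ[k] M} (one : f 1 = g 1)
    (mul_ι : ∀ ω x, f ω = g ω → f (ω * ι k x) = g (ω * ι k x)) : f = g := by
  suffices h : ∀ η ω : TensorAlgebra k V, f ω = g ω → f (ω * η) = g (ω * η) from
    LinearMap.ext fun η => by simpa using h η 1 one
  intro η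
  induction η using TensorAlgebra.induction with
  | algebraMap r =>
    intro ω h
    simp only [← Algebra.commutes, ← Algebra.smul_def, map_smul, h]
  | ι x => exact fun ω => mul_ι ω x
  | mul η ξ hη hξ => exact fun ω h => by simpa only [mul_assoc] using hξ _ (hη ω h)
  | add η ξ hη hξ => exact fun ω h => by simp only [mul_add, map_add, hη ω h, hξ ω h]

/-- One step of a right recursion on the tensor algebra: it updates the pair of a tensor `ω` and
the value at `ω` of the map being defined. -/
noncomputable def rightRecStep (step : V →ₗ[k] TensorAlgebra k V × M →ₗ[k] M) :
    V →ₗ[k] Module.End k (TensorAlgebra k V × M) :=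
  LinearMap.mk₂ k (fun x p => (p.1 * ι k x, step x p))
    (by simp [mul_add]) (by simp) (by simp [add_mul]) (by simp)

/-- Right recursion on the tensor algebra: the linear map `f` with `f 1 = 0` and
`f (ω ⊗ x) = step x (ω, f ω)`. The steps are composed in the opposite of the endomorphism algebra,
as the last tensor factor has to be processed last. -/
noncomputable def rightRec (step : V →ₗ[k] TensorAlgebra k V × M →ₗ[k] M) :
    TensorAlgebra k V →ₗ[k] M :=
  LinearMap.snd k (TensorAlgebra k V) M ∘ₗ LinearMap.applyₗ (1, 0) ∘ₗ
    (MulOpposite.opLinearEquiv k).symm.toLinearMap ∘ₗ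
    (TensorAlgebra.lift k
      ((MulOpposite.opLinearEquiv k).toLinearMap ∘ₗ rightRecStep step)).toLinearMap

variable (step : V →ₗ[k] TensorAlgebra k V × M →ₗ[k] M)

theorem rightRec_one : rightRec step 1 = 0 := by
  simp [rightRec]

theorem lift_rightRecStep_apply_fst (ω : TensorAlgebra k V) (p : TensorAlgebra k V × M) :
    ((TensorAlgebra.lift k ((MulOpposite.opLinearEquiv k).toLinearMap ∘ₗ
      rightRecStep step) ω).unop p).1 = p.1 * ω := by
  induction ω using TensorAlgebra.induction generalizing p with
  | algebraMap r => simp [Algebra.smul_def, Algebra.commutes]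
  | ι x => simp [rightRecStep]
  | mul η ξ hη hξ => simp [hη, hξ, mul_assoc]
  | add η ξ hη hξ => simp [hη, hξ, mul_add]

theorem rightRec_mul_ι (ω : TensorAlgebra k V) (x : V) :
    rightRec step (ω * ι k x) = step x (ω, rightRec step ω) := by
  set F := TensorAlgebra.lift k ((MulOpposite.opLinearEquiv k).toLinearMap ∘ₗ rightRecStep step)
  have pair_eq : (F ω).unop (1, 0) = (ω, rightRec step ω) :=
    Prod.ext ((lift_rightRecStep_apply_fst step ω (1, 0)).trans (one_mul ω)) rfl
  calc rightRec step (ω * ι k x)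
      = (rightRecStep step x ((F ω).unop (1, 0))).2 := by simp [rightRec, F]
    _ = step x (ω, rightRec step ω) := by rw [pair_eq]; rfl

end RightRecursion

section Loday

variable {k V : Type*} [CommRing k] [AddCommGroup V] [Module k V]

/-- `R` is the family of right multiplications `R y x = [x, y]` of a (right) Leibniz algebra
structure on `V`: the condition reads `[x, [y, z]] = [[x, y], z] - [[x, z], y]`. -/
def IsLeibniz (R : V →ₗ[k] Module.End k V) : Prop :=
  ∀ y z, R (R z y) = ⁅R z, R y⁆

/-- The action of `V` on its tensor algebra for which `tensorAct R y` is the derivation extending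
the right multiplication `R y`. -/
noncomputable def tensorAct (R : V →ₗ[k] Module.End k V) :
    V →ₗ[k] Module.End k (TensorAlgebra k V) :=
  (rightRec (M := V →ₗ[k] TensorAlgebra k V) <| LinearMap.mk₂ k
    (fun x p => LinearMap.mulLeft k p.1 ∘ₗ ι k ∘ₗ R.flip x +
      LinearMap.mulRight k (ι k x) ∘ₗ p.2)
    (fun x x' p => by ext; simp [mul_add, add_add_add_comm]) (fun c x p => by ext; simp)
    (fun x p p' => by ext; simp [add_mul, add_add_add_comm]) (fun c x p => by ext; simp)).flip

variable (R : V →ₗ[k] Module.End k V)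

@[simp]
theorem tensorAct_one (y : V) : tensorAct R y 1 = 0 := by
  simp [tensorAct, rightRec_one]

@[simp]
theorem tensorAct_mul_ι (y : V) (ω : TensorAlgebra k V) (x : V) :
    tensorAct R y (ω * ι k x) = ω * ι k (R y x) + tensorAct R y ω * ι k x := by
  simp [tensorAct, rightRec_mul_ι]

/-- The boundary map of the Loday complex computing Leibniz homology, in all degrees at once. On
`(m + 1)`-fold tensors it is `(-1) ^ m` times the usual alternating sum, see
`lodayBoundary_tprod`. -/
noncomputable def lodayBoundary : Module.End k (TensorAlgebra k V) :=
  rightRec <| LinearMap.mk₂ k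
    (fun x p => tensorAct R x p.1 - p.2 * ι k x)
    (fun x x' p => by simp [mul_add, add_sub_add_comm]) (fun c x p => by simp [smul_sub])
    (fun x p p' => by simp [add_mul, add_sub_add_comm]) (fun c x p => by simp [smul_sub])

@[simp]
theorem lodayBoundary_one : lodayBoundary R 1 = 0 :=
  rightRec_one _

@[simp]
theorem lodayBoundary_mul_ι (ω : TensorAlgebra k V) (x : V) :
    lodayBoundary R (ω * ι k x) = tensorAct R x ω - lodayBoundary R ω * ι k x := by
  simp [lodayBoundary, rightRec_mul_ι]

variable {R}

theorem IsLeibniz.tensorAct_apply_eq_lie (hR : IsLeibniz R) (y z : V) :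
    tensorAct R (R z y) = ⁅tensorAct R z, tensorAct R y⁆ := by
  refine tensorAlgebra_linearMap_ext_right (by simp [Ring.lie_def]) fun ω x h => ?_
  have hx : R (R z y) x = R z (R y x) - R y (R z x) := by rw [hR]; simp [Ring.lie_def]
  simp only [tensorAct_mul_ι, h, hx, Ring.lie_def, LinearMap.sub_apply,
    Module.End.mul_apply, map_add, map_sub]
  noncomm_ring

theorem IsLeibniz.lodayBoundary_comp_tensorAct (hR : IsLeibniz R) (y : V) :
    lodayBoundary R ∘ₗ tensorAct R y = tensorAct R y ∘ₗ lodayBoundary R := by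
  refine tensorAlgebra_linearMap_ext_right (by simp) fun ω x h => ?_
  simp only [LinearMap.comp_apply, map_add, map_sub, tensorAct_mul_ι, lodayBoundary_mul_ι,
    hR.tensorAct_apply_eq_lie, Ring.lie_def, LinearMap.sub_apply, Module.End.mul_apply] at h ⊢
  rw [h]
  noncomm_ring

theorem IsLeibniz.lodayBoundary_comp_self (hR : IsLeibniz R) :
    lodayBoundary R ∘ₗ lodayBoundary R = 0 := by
  refine tensorAlgebra_linearMap_ext_right (by simp) fun ω x h => ?_
  have comm : lodayBoundary R (tensorAct R x ω) = tensorAct R x (lodayBoundary R ω) :=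
    LinearMap.congr_fun (hR.lodayBoundary_comp_tensorAct x) ω
  rw [LinearMap.comp_apply, LinearMap.zero_apply] at h ⊢
  rw [lodayBoundary_mul_ι, map_sub, lodayBoundary_mul_ι, comm, h, zero_mul, sub_zero, sub_self]

end Loday

section LodayFormula

variable {k V : Type*} [CommRing k] [AddCommGroup V] [Module k V] (R : V →ₗ[k] Module.End k V)

theorem tprod_succ_eq_mul_ι {m : ℕ} (a : Fin (m + 1) → V) :
    tprod k V (m + 1) a = tprod k V m (Fin.init a) * ι k (a (Fin.last m)) := by
  simp only [TensorAlgebra.tprod_apply, List.ofFn_succ', List.concat_eq_append, List.prod_append,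
    List.prod_singleton, Fin.init]

theorem tensorAct_tprod (y : V) {m : ℕ} (a : Fin m → V) :
    tensorAct R y (tprod k V m a) = ∑ i, tprod k V m (update a i (R y (a i))) := by
  induction m with
  | zero => simp [TensorAlgebra.tprod_apply]
  | succ m ih =>
    rw [tprod_succ_eq_mul_ι, tensorAct_mul_ι, ih, Fin.sum_univ_castSucc, Finset.sum_mul, add_comm]
    simp only [tprod_succ_eq_mul_ι, Fin.init_update_castSucc, Fin.init_update_last, update_self,
      update_of_ne (Fin.castSucc_ne_last _).symm]
    rfl

/-- The `(i, j)`-th face of a tensor in the Loday complex: for `i < j` the factor `a i` is replaced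
by the product `[a i, a j]` and the factor `a j` is omitted. -/
def lodayFace {m : ℕ} (a : Fin (m + 1) → V) (i j : Fin (m + 1)) : Fin m → V :=
  j.removeNth (update a i (R (a j) (a i)))

theorem lodayFace_last {m : ℕ} (a : Fin (m + 1) → V) (i : Fin m) :
    lodayFace R a i.castSucc (Fin.last m) =
      update (Fin.init a) i (R (a (Fin.last m)) (Fin.init a i)) := by
  rw [lodayFace, Fin.removeNth_last, Fin.init_update_castSucc, Fin.init]

theorem tprod_lodayFace_castSucc {m : ℕ} (a : Fin (m + 2) → V) (i j : Fin (m + 1)) :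
    tprod k V (m + 1) (lodayFace R a i.castSucc j.castSucc) =
      tprod k V m (lodayFace R (Fin.init a) i j) * ι k (a (Fin.last (m + 1))) := by
  have init_removeNth (b : Fin (m + 2) → V) :
      Fin.init (j.castSucc.removeNth b) = j.removeNth (Fin.init b) := by
    funext l; simp [Fin.init, Fin.removeNth]
  rw [tprod_succ_eq_mul_ι, lodayFace, init_removeNth, Fin.init_update_castSucc, Fin.removeNth_apply,
    Fin.succAbove_ne_last_last (Fin.castSucc_ne_last j), update_of_ne (Fin.castSucc_ne_last i).symm]
  rfl

theorem lodayBoundary_tprod {m : ℕ} (a : Fin (m + 1) → V) :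
    lodayBoundary R (tprod k V (m + 1) a) =
      (-1 : ℤ) ^ m • ∑ j : Fin (m + 1), (-1 : ℤ) ^ (j : ℕ) •
        ∑ i ∈ Finset.Iio j, tprod k V m (lodayFace R a i j) := by
  induction m with
  | zero => simpa using lodayBoundary_mul_ι R 1 (a 0)
  | succ m ih =>
    have last_summand : ∑ i ∈ Finset.Iio (Fin.last (m + 1)),
        tprod k V (m + 1) (lodayFace R a i (Fin.last (m + 1))) =
          tensorAct R (a (Fin.last (m + 1))) (tprod k V (m + 1) (Fin.init a)) := by
      rw [Fin.Iio_last_eq_map, Finset.sum_map, tensorAct_tprod]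
      exact Finset.sum_congr rfl fun i _ => by rw [Fin.coe_castSuccEmb, lodayFace_last]
    have sign_last : (-1 : ℤ) ^ (m + 1) * (-1) ^ (m + 1) = 1 := by rw [← mul_pow]; simp
    rw [tprod_succ_eq_mul_ι, lodayBoundary_mul_ι, ih, Fin.sum_univ_castSucc (n := m + 1), smul_add,
      Fin.val_last, smul_smul, sign_last, one_smul, last_summand, sub_eq_neg_add,
      pow_succ (-1 : ℤ) m, mul_neg_one, neg_smul]
    simp only [Fin.sum_Iio_castSucc, tprod_lodayFace_castSucc, Fin.val_castSucc, ← Finset.sum_mul,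
      ← smul_mul_assoc]

end LodayFormula

section FreeLeibniz

attribute [local instance] LieRing.ofAssociativeRing

variable {k V α : Type*} [CommRing k] [AddCommGroup V] [Module k V]

theorem freeSemigroup_induction_right {P : FreeSemigroup α → Prop} (of : ∀ c, P (.of c))
    (mul_of : ∀ w d, P w → P (w * .of d)) (w : FreeSemigroup α) : P w := by
  obtain ⟨c, l⟩ := w
  induction l using List.reverseRecOn with
  | nil => exact of c
  | append_singleton l d ih => exact mul_of ⟨c, l⟩ d ih

variable (e : Module.Basis (FreeSemigroup α) k V)

/-- Appending the letter `d` to every word, as an endomorphism of a module with basis the nonempty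
words. -/
noncomputable def appendLetter (d : α) : Module.End k V :=
  e.constr k fun w => e (w * .of d)

@[simp]
theorem appendLetter_basis (d : α) (w : FreeSemigroup α) :
    appendLetter e d (e w) = e (w * .of d) :=
  e.constr_basis k _ w

/-- Right multiplication by a word in the free Leibniz algebra, where the word `c₀ c₁ ⋯ cₚ` is the
left-normed product `[⋯[[c₀, c₁], c₂], ⋯, cₚ]` of its letters. -/
noncomputable def wordBracket (w : FreeSemigroup α) : Module.End k V :=
  w.tail.foldl (fun f d => ⁅appendLetter e d, f⁆) (appendLetter e w.head)

@[simp]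
theorem wordBracket_of (c : α) : wordBracket e (.of c) = appendLetter e c := rfl

@[simp]
theorem wordBracket_mul_of (w : FreeSemigroup α) (d : α) :
    wordBracket e (w * .of d) = ⁅appendLetter e d, wordBracket e w⁆ := by
  simp [wordBracket]

/-- The right multiplications `y ↦ (x ↦ [x, y])` of the free Leibniz algebra on `α`, modelled on
any module with basis the nonempty words `FreeSemigroup α`. -/
noncomputable def freeLeibniz : V →ₗ[k] Module.End k V :=
  e.constr k (wordBracket e)

@[simp]
theorem freeLeibniz_basis (w : FreeSemigroup α) : freeLeibniz e (e w) = wordBracket e w :=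
  e.constr_basis k _ w

theorem freeLeibniz_appendLetter (d : α) (v : V) :
    freeLeibniz e (appendLetter e d v) = ⁅appendLetter e d, freeLeibniz e v⁆ := by
  suffices h : freeLeibniz e ∘ₗ appendLetter e d =
      LieModule.toEnd k (Module.End k V) (Module.End k V) (appendLetter e d) ∘ₗ freeLeibniz e from
    LinearMap.congr_fun h v
  exact e.ext fun w => by simp

theorem freeLeibniz_wordBracket (w : FreeSemigroup α) (v : V) :
    freeLeibniz e (wordBracket e w v) = ⁅wordBracket e w, freeLeibniz e v⁆ := by
  induction w using freeSemigroup_induction_right generalizing v with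
  | of c => exact freeLeibniz_appendLetter e c v
  | mul_of w d ih =>
    have jacobi := lie_lie (appendLetter e d) (wordBracket e w) (freeLeibniz e v)
    rw [← ih, ← freeLeibniz_appendLetter, ← freeLeibniz_appendLetter, ← ih, ← map_sub] at jacobi
    rw [wordBracket_mul_of, jacobi]
    rfl

theorem isLeibniz_freeLeibniz : IsLeibniz (freeLeibniz e) := by
  intro y z
  suffices h : freeLeibniz e ∘ₗ (freeLeibniz e).flip y =
      -(LieModule.toEnd k (Module.End k V) (Module.End k V) (freeLeibniz e y) ∘ₗ freeLeibniz e) from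
    (LinearMap.congr_fun h z).trans (lie_skew _ _)
  exact e.ext fun w => by simp [freeLeibniz_wordBracket]

end FreeLeibniz

section Words

open Finset

theorem sort_insert_of_lt {α : Type*} [LinearOrder α] {S : Finset α} {a : α} (h : ∀ b ∈ S, b < a) :
    (insert a S).sort (· ≤ ·) = S.sort (· ≤ ·) ++ [a] := by
  have ha : a ∉ S := fun h' => lt_irrefl _ (h a h')
  refine List.Perm.eq_of_pairwise' (r := (· ≤ ·)) (pairwise_sort _ _) ?_ ?_
  · refine List.pairwise_append.2 ⟨pairwise_sort _ _, List.pairwise_singleton _ _, ?_⟩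
    intro b hb c hc
    rw [List.mem_singleton.1 hc]
    exact (h b ((mem_sort _).1 hb)).le
  · rw [← Multiset.coe_eq_coe, ← Multiset.coe_add, sort_eq, sort_eq, insert_val_of_notMem ha,
      ← Multiset.singleton_add, add_comm, Multiset.coe_singleton]

theorem insert_Icc_one_sub_one {N : ℕ} (hN : N ≠ 0) : insert N (Icc 1 (N - 1)) = Icc 1 N := by
  ext a; simp only [mem_Icc, mem_insert]; omega

theorem lt_of_mem_Icc_one_sub_one {N a : ℕ} (ha : a ∈ Icc 1 (N - 1)) : a < N := by
  rw [mem_Icc] at ha; omega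

theorem headI_append_of_ne_nil {α : Type*} [Inhabited α] {y : List α} (hy : y ≠ []) (z : List α) :
    (y ++ z).headI = y.headI := by
  cases y with
  | nil => exact absurd rfl hy
  | cons => rfl

theorem map_getD_concat {α : Type*} {y : List α} (c d : α) {s : List ℕ}
    (hs : ∀ ℓ ∈ s, ℓ < y.length) :
    s.map (fun ℓ => (y ++ [d]).getD ℓ c) = s.map (fun ℓ => y.getD ℓ c) :=
  List.map_congr_left fun ℓ hℓ => List.getD_append _ _ _ _ (hs ℓ hℓ)

theorem starOp_concat (x : List ℕ) {y : List ℕ} (hy : y ≠ []) (d : ℕ) {S : Finset ℕ}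
    (hS : S ⊆ Icc 1 (y.length - 1)) : starOp x (y ++ [d]) S = starOp x y S ++ [d] := by
  have hlt : ∀ a ∈ Icc 1 (y.length - 1) \ S, a < y.length :=
    fun a ha => lt_of_mem_Icc_one_sub_one (mem_sdiff.1 ha).1
  have hlen : y.length ∉ S := fun h => lt_irrefl _ (lt_of_mem_Icc_one_sub_one (hS h))
  simp only [starOp, List.length_append, List.length_singleton, Nat.add_sub_cancel,
    ← insert_Icc_one_sub_one (List.length_pos_iff.2 hy).ne', insert_sdiff_of_notMem _ hlen,
    sort_insert_of_lt hlt, headI_append_of_ne_nil hy]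
  rw [map_getD_concat 0 d, List.map_append, map_getD_concat 0 d]
  · simp
  · simpa using hlt
  · simpa using fun a ha => lt_of_mem_Icc_one_sub_one (hS ha)

theorem starOp_concat_insert (x : List ℕ) {y : List ℕ} (hy : y ≠ []) (d : ℕ) {S : Finset ℕ}
    (hS : S ⊆ Icc 1 (y.length - 1)) :
    starOp x (y ++ [d]) (insert y.length S) = starOp (x ++ [d]) y S := by
  have hlt : ∀ a ∈ S, a < y.length := fun a ha => lt_of_mem_Icc_one_sub_one (hS ha)
  have hlen : y.length ∉ Icc 1 (y.length - 1) :=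
    fun h => lt_irrefl _ (lt_of_mem_Icc_one_sub_one h)
  simp only [starOp, List.length_append, List.length_singleton, Nat.add_sub_cancel,
    ← insert_Icc_one_sub_one (List.length_pos_iff.2 hy).ne', insert_sdiff_insert,
    sdiff_insert_of_notMem hlen, sort_insert_of_lt hlt, headI_append_of_ne_nil hy]
  rw [List.reverse_concat, List.map_cons, map_getD_concat 0 d, map_getD_concat 0 d]
  · simp
  · simpa only [mem_sort] using fun a ha => lt_of_mem_Icc_one_sub_one (mem_sdiff.1 ha).1
  · simpa using hlt

theorem starOp_perm (x : List ℕ) {y : List ℕ} (hy : y ≠ []) {S : Finset ℕ}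
    (hS : S ⊆ Icc 1 (y.length - 1)) : (starOp x y S).Perm (x ++ y) := by
  induction y using List.reverseRecOn generalizing x S with
  | nil => exact absurd rfl hy
  | append_singleton y d ih =>
    rcases eq_or_ne y [] with rfl | hy
    · obtain rfl : S = ∅ := by simpa using hS
      simp [starOp]
    rw [List.length_append, List.length_singleton, Nat.add_sub_cancel,
      ← insert_Icc_one_sub_one (List.length_pos_iff.2 hy).ne', subset_insert_iff] at hS
    by_cases hlen : y.length ∈ S
    · rw [← insert_erase hlen, starOp_concat_insert x hy d hS]
      refine (ih _ hy hS).trans ?_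
      rw [List.append_assoc]
      exact List.perm_append_comm.append_left x
    · rw [erase_eq_of_notMem hlen] at hS
      rw [starOp_concat x hy d hS, ← List.append_assoc]
      exact (ih x hy hS).append_right _

/-- A block viewed as a nonempty word; the empty list is sent to the one-letter word `0`. -/
def blockWord (l : List ℕ) : FreeSemigroup ℕ := ⟨l.headI, l.tail⟩

theorem blockWord_concat {l : List ℕ} (hl : l ≠ []) (d : ℕ) :
    blockWord (l ++ [d]) = blockWord l * .of d := by
  obtain ⟨c, l, rfl⟩ := List.exists_cons_of_ne_nil hl
  rfl

theorem starOp_ne_nil (x y : List ℕ) (S : Finset ℕ) : starOp x y S ≠ [] := by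
  simp [starOp]

variable {k V : Type*} [CommRing k] [AddCommGroup V] [Module k V]
  (e : Module.Basis (FreeSemigroup ℕ) k V)

theorem freeLeibniz_blockWord {x y : List ℕ} (hx : x ≠ []) (hy : y ≠ []) :
    freeLeibniz e (e (blockWord y)) (e (blockWord x)) =
      ∑ S ∈ (Icc 1 (y.length - 1)).powerset,
        (-1 : ℤ) ^ #S • e (blockWord (starOp x y S)) := by
  rw [freeLeibniz_basis]
  induction y using List.reverseRecOn generalizing x with
  | nil => exact absurd rfl hy
  | append_singleton y d ih =>
    rcases eq_or_ne y [] with rfl | hy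
    · have hd : blockWord [d] = .of d := rfl
      simp [hd, starOp, blockWord_concat hx]
    have hlen : y.length ∉ Icc 1 (y.length - 1) :=
      fun h => lt_irrefl _ (lt_of_mem_Icc_one_sub_one h)
    rw [blockWord_concat hy, wordBracket_mul_of, Ring.lie_def, LinearMap.sub_apply,
      Module.End.mul_apply, Module.End.mul_apply, appendLetter_basis, ← blockWord_concat hx,
      ih hx hy, ih (by simp) hy, List.length_append, List.length_singleton, Nat.add_sub_cancel,
      ← insert_Icc_one_sub_one (List.length_pos_iff.2 hy).ne', sum_powerset_insert hlen,
      sub_eq_add_neg, ← sum_neg_distrib, map_sum]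
    -- The last letter `d` ends `x *_S (y ++ [d])` or directly follows `x`, according as
    -- `y.length ∉ S` or `y.length ∈ S`: these are the two terms of the commutator.
    congr 1 <;> refine sum_congr rfl fun S hS => ?_
    · rw [starOp_concat x hy d (mem_powerset.1 hS), blockWord_concat (starOp_ne_nil x y S),
        map_zsmul, appendLetter_basis]
    · rw [starOp_concat_insert x hy d (mem_powerset.1 hS),
        card_insert_of_notMem fun h => hlen (mem_powerset.1 hS h), pow_succ, mul_neg_one, neg_smul]

end Words

section Merge

theorem removeReplace_eq {m : ℕ} (B : Fin (m + 2) → List ℕ) {i j : Fin (m + 2)} (hij : i < j)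
    (S : Finset ℕ) :
    removeReplace B i j S = j.removeNth (update B i (starOp (B i) (B j) S)) := by
  funext l
  rw [removeReplace, Fin.removeNth_apply]
  split_ifs with hlj hli
  · obtain rfl : l.castSucc = i := Fin.ext hli
    rw [Fin.succAbove_of_castSucc_lt j l hlj, update_self]
  · rw [Fin.succAbove_of_castSucc_lt j l hlj, update_of_ne fun h => hli (congrArg Fin.val h)]
  · have hjl : j ≤ l.castSucc := not_lt.1 hlj
    rw [Fin.succAbove_of_le_castSucc j l hjl,
      update_of_ne (hij.trans_le hjl |>.trans l.castSucc_lt_succ).ne']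

theorem coe_flatten_ofFn {α : Type*} {m : ℕ} (B : Fin m → List α) :
    ((List.ofFn B).flatten : Multiset α) = ∑ i, (B i : Multiset α) := by
  induction m with
  | zero => simp
  | succ m ih => rw [List.ofFn_succ, List.flatten_cons, ← Multiset.coe_add, ih, Fin.sum_univ_succ]

theorem flatten_removeNth_update_perm {α : Type*} {m : ℕ} {B : Fin (m + 1) → List α}
    {i j : Fin (m + 1)} (hij : i ≠ j) {l : List α} (hl : l.Perm (B i ++ B j)) :
    (List.ofFn (j.removeNth (update B i l))).flatten.Perm (List.ofFn B).flatten := by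
  obtain ⟨i, rfl⟩ := Fin.exists_succAbove_eq hij
  rw [← Multiset.coe_eq_coe, coe_flatten_ofFn, coe_flatten_ofFn, Fin.sum_univ_succAbove _ j,
    Fin.removeNth_update_succAbove, ← Finset.add_sum_erase _ _ (Finset.mem_univ i),
    ← Finset.add_sum_erase _ (fun t => (B (j.succAbove t) : Multiset α)) (Finset.mem_univ i),
    ← add_assoc, update_self, Multiset.coe_eq_coe.2 hl, ← Multiset.coe_add,
    add_comm (B j : Multiset α)]
  congr 1
  exact Finset.sum_congr rfl fun t ht => by rw [update_of_ne (Finset.ne_of_mem_erase ht)]; rfl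

theorem headI_le_of_mem {α : Type*} [Preorder α] [Inhabited α] {l : List α}
    (h : ∀ x ∈ l.tail, l.headI < x) {x : α} (hx : x ∈ l) : l.headI ≤ x := by
  cases l with
  | nil => simp at hx
  | cons a l => exact (List.mem_cons.1 hx).elim (fun h => h.ge) fun hx => (h x hx).le

theorem IsSTuple.merge {n m : ℕ} {B : Fin (m + 2) → List ℕ} (hB : IsSTuple n (m + 1) B)
    {i j : Fin (m + 2)} (hij : i < j) {w : List ℕ} (hw : w.Perm (B j)) :
    IsSTuple n m (j.removeNth (update B i (B i ++ w))) := by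
  obtain ⟨ne_nil, perm_range, heads_lt, head_lt_tail⟩ := hB
  have append_headI : (B i ++ w).headI = (B i).headI := headI_append_of_ne_nil (ne_nil i) w
  have append_head_lt_tail : ∀ x ∈ (B i ++ w).tail, (B i ++ w).headI < x := by
    rw [append_headI, List.tail_append_of_ne_nil (ne_nil i)]
    exact List.forall_mem_append.2 ⟨head_lt_tail i, fun x hx =>
      (heads_lt i j hij).trans_le (headI_le_of_mem (head_lt_tail j) (hw.mem_iff.1 hx))⟩
  have update_headI : ∀ l, (update B i (B i ++ w) l).headI = (B l).headI :=
    (forall_update_iff B fun l b => b.headI = (B l).headI).2 ⟨append_headI, fun _ _ => rfl⟩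
  refine ⟨fun l => ?_, (flatten_removeNth_update_perm hij.ne (hw.append_left _)).trans perm_range,
    fun s t hst => ?_, fun l => ?_⟩
  · exact (forall_update_iff B fun _ b => b ≠ []).2
      ⟨List.append_ne_nil_of_left_ne_nil (ne_nil i) w, fun l _ => ne_nil l⟩ _
  · simpa only [Fin.removeNth_apply, update_headI] using
      heads_lt _ _ (Fin.strictMono_succAbove j hst)
  · exact (forall_update_iff B fun _ b => ∀ x ∈ b.tail, b.headI < x).2
      ⟨append_head_lt_tail, fun l _ => head_lt_tail l⟩ _

theorem isSTuple_removeReplace {n m : ℕ} {B : Fin (m + 2) → List ℕ} (hB : IsSTuple n (m + 1) B)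
    {i j : Fin (m + 2)} (hij : i < j) {S : Finset ℕ}
    (hS : S ⊆ Finset.Icc 1 ((B j).length - 1)) : IsSTuple n m (removeReplace B i j S) := by
  have starOp_eq_append : starOp (B i) (B j) S = B i ++ starOp [] (B j) S := by simp [starOp]
  rw [removeReplace_eq B hij, starOp_eq_append]
  exact hB.merge hij (starOp_perm [] (hB.1 j) hS)

end Merge

section Embedding

variable {k V κ : Type*} [CommRing k] [AddCommGroup V] [Module k V]

theorem tensorAlgebra_basis_ofList (e : Module.Basis κ k V) (l : List κ) :
    e.tensorAlgebra (FreeMonoid.ofList l) = (l.map fun c => ι k (e c)).prod := by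
  have basisFreeMonoid_apply : FreeAlgebra.basisFreeMonoid k κ (FreeMonoid.ofList l) =
      (l.map (FreeAlgebra.ι k)).prod := by
    simp [FreeAlgebra.basisFreeMonoid, FreeAlgebra.equivMonoidAlgebraFreeMonoid,
      FreeMonoid.lift_apply]
  simp [Module.Basis.tensorAlgebra, basisFreeMonoid_apply, map_list_prod, comp_def]

theorem linearIndependent_tprod_basis (e : Module.Basis κ k V) (m : ℕ) :
    LinearIndependent k fun w : Fin m → κ => tprod k V m fun i => e (w i) := by
  convert e.tensorAlgebra.linearIndependent.comp _
    (FreeMonoid.ofList.injective.comp (List.ofFn_injective (n := m))) using 2 with w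
  simp [TensorAlgebra.tprod_apply, tensorAlgebra_basis_ofList, List.map_ofFn, comp_def]

theorem blockWord_injOn : Set.InjOn blockWord {l | l ≠ []} := by
  intro l₁ hl₁ l₂ hl₂ h
  obtain ⟨c₁, l₁, rfl⟩ := List.exists_cons_of_ne_nil hl₁
  obtain ⟨c₂, l₂, rfl⟩ := List.exists_cons_of_ne_nil hl₂
  simpa [blockWord] using h

variable (e : Module.Basis (FreeSemigroup ℕ) k V)

/-- The embedding `(B₀ | … | Bₘ) ↦ B₀ ⊗ ⋯ ⊗ Bₘ` of `K(n)_m` into the tensor algebra of the free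
Leibniz algebra on `ℕ`. -/
noncomputable def toLoday (n m : ℕ) : Kmod k n m →ₗ[k] TensorAlgebra k V :=
  Finsupp.linearCombination k fun b => tprod k V (m + 1) fun i => e (blockWord (b.B i))

theorem toLoday_single {n m : ℕ} (b : STuple n m) :
    toLoday e n m (Finsupp.single b 1) = tprod k V (m + 1) fun i => e (blockWord (b.B i)) := by
  rw [toLoday, Finsupp.linearCombination_single, one_smul]

theorem toLoday_injective (n m : ℕ) : Injective (toLoday e n m) := by
  have hinj : Injective fun (b : STuple n m) i => blockWord (b.B i) := by
    rintro ⟨B, hB⟩ ⟨B', hB'⟩ h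
    congr
    funext i
    exact blockWord_injOn (hB.1 i) (hB'.1 i) (congrFun h i)
  exact (linearIndependent_tprod_basis e (m + 1)).comp _ hinj

theorem Dmap_single (k : Type*) [CommRing k] (n m : ℕ) (b : STuple n (m + 1)) :
    Dmap k n m (Finsupp.single b 1) = ∑ j : Fin (m + 2), (-1 : ℤ) ^ (j : ℕ) •
      ∑ i ∈ Finset.Iio j, ∑ S ∈ (Finset.Icc 1 ((b.B j).length - 1)).powerset,
        (-1 : ℤ) ^ S.card • toBasisK k n m (removeReplace b.B i j S) := by
  rw [Dmap, Finsupp.lift_apply, Finsupp.sum_single_index (by simp), one_smul]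
  refine Finset.sum_congr rfl fun j _ => ?_
  rw [Finset.smul_sum, ← Finset.sum_filter]
  exact Finset.sum_congr (by ext; simp) fun _ _ => rfl

theorem toLoday_toBasisK {n m : ℕ} {B : Fin (m + 1) → List ℕ} (hB : IsSTuple n m B) :
    toLoday e n m (toBasisK k n m B) = tprod k V (m + 1) fun i => e (blockWord (B i)) := by
  rw [toBasisK, dif_pos hB, toLoday_single]

theorem tprod_lodayFace_blockWord {n m : ℕ} (b : STuple n (m + 1)) {i j : Fin (m + 2)}
    (hij : i < j) :
    tprod k V (m + 1) (lodayFace (freeLeibniz e) (fun l => e (blockWord (b.B l))) i j) =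
      toLoday e n m (∑ S ∈ (Finset.Icc 1 ((b.B j).length - 1)).powerset,
        (-1 : ℤ) ^ S.card • toBasisK k n m (removeReplace b.B i j S)) := by
  obtain ⟨s, rfl⟩ := Fin.exists_succAbove_eq hij.ne
  rw [lodayFace, Fin.removeNth_update_succAbove, freeLeibniz_blockWord e (b.prop.1 _) (b.prop.1 j),
    MultilinearMap.map_update_sum, map_sum]
  refine Finset.sum_congr rfl fun S hS => ?_
  rw [map_zsmul,
    toLoday_toBasisK e (isSTuple_removeReplace b.prop hij (Finset.mem_powerset.1 hS)),
    removeReplace_eq b.B hij, Fin.removeNth_update_succAbove,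
    ← MultilinearMap.toLinearMap_apply, map_zsmul, MultilinearMap.toLinearMap_apply]
  exact congrArg (fun a => _ • tprod k V (m + 1) a)
    (comp_update (fun l => e (blockWord l)) (j.removeNth b.B) s _).symm

theorem toLoday_comp_Dmap (n m : ℕ) :
    toLoday e n m ∘ₗ Dmap k n m =
      (-1 : ℤ) ^ (m + 1) • lodayBoundary (freeLeibniz e) ∘ₗ toLoday e n (m + 1) := by
  refine Finsupp.lhom_ext' fun b => LinearMap.ext_ring ?_
  have sign_sq : (-1 : ℤ) ^ (m + 1) * (-1) ^ (m + 1) = 1 := by rw [← mul_pow]; simp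
  simp only [LinearMap.comp_apply, LinearMap.smul_apply, Finsupp.lsingle_apply, Dmap_single,
    map_sum, map_zsmul]
  rw [toLoday_single, lodayBoundary_tprod, smul_smul, sign_sq, one_smul]
  refine Finset.sum_congr rfl fun j _ => congrArg _ (Finset.sum_congr rfl fun i hij => ?_)
  rw [tprod_lodayFace_blockWord e b (Finset.mem_Iio.1 hij)]
  simp only [map_sum, map_zsmul]

end Embedding

/-- Proposition ("`D ∘ D = 0`"): the map `D` on the graded `k`-module `K(n)` squares to
zero, so `(K(n)_*, D)` is a chain complex of `k`-modules. -/
theorem Dmap_comp_Dmap (k : Type*) [CommRing k] (n : ℕ) :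
    ∀ m : ℕ, (Dmap k n m).comp (Dmap k n (m + 1)) = 0 := by
  intro m
  let e : Module.Basis (FreeSemigroup ℕ) k (FreeSemigroup ℕ →₀ k) := Finsupp.basisSingleOne
  refine LinearMap.ext fun c => toLoday_injective e n m ?_
  have boundary_sq : lodayBoundary (freeLeibniz e) ∘ₗ lodayBoundary (freeLeibniz e) = 0 :=
    (isLeibniz_freeLeibniz e).lodayBoundary_comp_self
  have intertwine (m : ℕ) (c : Kmod k n (m + 1)) : toLoday e n m (Dmap k n m c) =
      (-1 : ℤ) ^ (m + 1) • lodayBoundary (freeLeibniz e) (toLoday e n (m + 1) c) :=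
    LinearMap.congr_fun (toLoday_comp_Dmap e n m) c
  calc toLoday e n m (Dmap k n m (Dmap k n (m + 1) c))
      = (-1 : ℤ) ^ (m + 1) • (-1 : ℤ) ^ (m + 2) •
          (lodayBoundary (freeLeibniz e) ∘ₗ lodayBoundary (freeLeibniz e))
            (toLoday e n (m + 2) c) := by
        rw [intertwine, intertwine, map_zsmul, LinearMap.comp_apply]
    _ = toLoday e n m 0 := by rw [boundary_sq]; simp
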